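/- There exists an absolute constant c₀ > 0 with the following property: for every n ≥ 1, every a > 0 and every smooth compactly supported function u : ℝⁿ × (0,2) → ℝ, one has ∫₀²∫_{ℝⁿ} h(t)^{−2a} e^{−|x|²/(4t)} ( (a/t)·u(x,t)² + |∇u(x,t)|² ) dx dt ≤ c₀ ∫₀²∫_{ℝⁿ} h(t)^{−2a} e^{−|x|²/(4t)} |∂ₜu(x,t) + Δu(x,t)|² dx dt. -/

import Mathlib

open Real Set Filter MeasureTheory

/-- The Laplacian of `f` at `x`, computed as the sum of the second partial
derivatives in the coordinate directions. -/
noncomputable def lap {n : ℕ} (f : EuclideanSpace ℝ (Fin n) → ℝ)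
    (x : EuclideanSpace ℝ (Fin n)) : ℝ :=
  ∑ i, fderiv ℝ (fun y => fderiv ℝ f y (EuclideanSpace.single i 1)) x
      (EuclideanSpace.single i 1)

/-- The weight `h(t) = t e^{(1-t)/3}`. -/
noncomputable def hfun (t : ℝ) : ℝ := t * Real.exp ((1 - t) / 3)

/-!
Let `ω = h^{-2b} e^{-|x|²/4t}` with `b = a + 1`. In `L²(ω)` one has `t (∂ₜ + Δ) = S + Y`, where
`Y = x/2 · ∇ + t ∂ₜ + σ(t)`, the generator of the parabolic dilations corrected by half its
divergence, is skew-symmetric, and `S = t Δ - x/2 · ∇ - σ(t)` is symmetric. Since `t Δ - x/2 · ∇` is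
invariant under parabolic dilations, the only contribution to the commutator of `S` and `Y` is
`t σ' = b t / 3`, so that integrating `(S u + Y u)² ≥ 4 (S u) (Y u)` gives
`2 b / 3 ∫ ω t u² ≤ ∫ ω |t (∂ₜ + Δ) u|²`; the factor `e^{(1-t)/3}` in `h` is there to make `σ`
increasing. Pairing `t (∂ₜ + Δ) u` with `t u` then controls the gradient. Finally `h(t)` and `t` are
comparable on `(0, 2)`, so the factors `t²` shift the exponent from `b` back to `a`.
-/

open scoped ContDiff

section TestFunction

variable {E : Type*} [NormedAddCommGroup E] [NormedSpace ℝ E] {Ω : Set E} {f g : E → ℝ}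

/-- Real-valued test functions on `Ω`: smooth functions on the whole space whose support is compact
and contained in `Ω`. This is the unbundled form of Mathlib's `TestFunction`, for an arbitrary set
`Ω`, so that products and derivatives can be written pointwise. -/
structure IsTestFunction (Ω : Set E) (f : E → ℝ) : Prop where
  contDiff : ContDiff ℝ ∞ f
  hasCompactSupport : HasCompactSupport f
  tsupport_subset : tsupport f ⊆ Ω

namespace IsTestFunction

theorem differentiableAt (hf : IsTestFunction Ω f) (p : E) : DifferentiableAt ℝ f p :=
  hf.contDiff.differentiable (by simp) p

theorem eq_zero_of_notMem (hf : IsTestFunction Ω f) {p : E} (hp : p ∉ Ω) : f p = 0 :=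
  image_eq_zero_of_notMem_tsupport fun h => hp (hf.tsupport_subset h)

theorem of_support_subset (hf : IsTestFunction Ω f) (hg : ContDiff ℝ ∞ g)
    (hgf : Function.support g ⊆ tsupport f) : IsTestFunction Ω g :=
  have hsub : tsupport g ⊆ tsupport f := closure_minimal hgf (isClosed_tsupport f)
  ⟨hg, hf.hasCompactSupport.of_isClosed_subset (isClosed_tsupport g) hsub,
    hsub.trans hf.tsupport_subset⟩

theorem contDiffAt_mul (hf : IsTestFunction Ω f) (hg : ∀ p ∈ Ω, ContDiffAt ℝ ∞ g p) :
    IsTestFunction Ω fun p => g p * f p := by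
  have hsub : tsupport (fun p => g p * f p) ⊆ tsupport f := tsupport_mul_subset_right
  refine hf.of_support_subset (contDiff_iff_contDiffAt.2 fun p => ?_) (subset_closure.trans hsub)
  by_cases hp : p ∈ tsupport fun p => g p * f p
  · exact (hg p (hf.tsupport_subset (hsub hp))).mul hf.contDiff.contDiffAt
  · exact contDiffAt_const.congr_of_eventuallyEq (notMem_tsupport_iff_eventuallyEq.1 hp)

theorem contDiff_mul (hf : IsTestFunction Ω f) (hg : ContDiff ℝ ∞ g) :
    IsTestFunction Ω fun p => g p * f p :=
  hf.contDiffAt_mul fun _ _ => hg.contDiffAt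

theorem mul (hf : IsTestFunction Ω f) (hg : IsTestFunction Ω g) :
    IsTestFunction Ω fun p => f p * g p :=
  hg.contDiff_mul hf.contDiff

theorem sq (hf : IsTestFunction Ω f) : IsTestFunction Ω fun p => f p ^ 2 := by
  simpa only [pow_two] using hf.mul hf

theorem add (hf : IsTestFunction Ω f) (hg : IsTestFunction Ω g) :
    IsTestFunction Ω fun p => f p + g p where
  contDiff := hf.contDiff.add hg.contDiff
  hasCompactSupport := hf.hasCompactSupport.add hg.hasCompactSupport
  tsupport_subset := (tsupport_add f g).trans (union_subset hf.tsupport_subset hg.tsupport_subset)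

theorem sub (hf : IsTestFunction Ω f) (hg : IsTestFunction Ω g) :
    IsTestFunction Ω fun p => f p - g p := by
  simpa [sub_eq_add_neg] using hf.add (hg.contDiff_mul (contDiff_const (c := (-1 : ℝ))))

theorem sum {ι : Type*} {s : Finset ι} {F : ι → E → ℝ} (hF : ∀ i ∈ s, IsTestFunction Ω (F i)) :
    IsTestFunction Ω fun p => ∑ i ∈ s, F i p := by
  classical
  induction s using Finset.induction_on with
  | empty => exact ⟨by simpa using contDiff_const, by simp [HasCompactSupport, tsupport],
      by simp [tsupport]⟩
  | insert i s hi ih =>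
    simpa [Finset.sum_insert hi] using (hF i (Finset.mem_insert_self i s)).add
      (ih fun j hj => hF j (Finset.mem_insert_of_mem hj))

theorem fderiv_apply (hf : IsTestFunction Ω f) {X : E → E} (hX : ContDiff ℝ ∞ X) :
    IsTestFunction Ω fun p => fderiv ℝ f p (X p) := by
  refine hf.of_support_subset ((hf.contDiff.fderiv_right (by simp)).clm_apply hX) fun p hp => ?_
  exact support_fderiv_subset ℝ fun h => hp (by simp [h])

theorem ext_on (hf : IsTestFunction Ω f) (hg : IsTestFunction Ω g) (h : EqOn f g Ω) : f = g := by
  funext p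
  by_cases hp : p ∈ Ω
  · exact h hp
  · rw [hf.eq_zero_of_notMem hp, hg.eq_zero_of_notMem hp]

variable [MeasurableSpace E] [BorelSpace E] {μ : Measure E}

theorem integrable [IsFiniteMeasureOnCompacts μ] (hf : IsTestFunction Ω f) : Integrable f μ :=
  hf.contDiff.continuous.integrable_of_hasCompactSupport hf.hasCompactSupport

theorem integral_mono_on [IsFiniteMeasureOnCompacts μ] (hf : IsTestFunction Ω f)
    (hg : IsTestFunction Ω g) (h : ∀ p ∈ Ω, f p ≤ g p) : ∫ p, f p ∂μ ≤ ∫ p, g p ∂μ := by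
  refine integral_mono hf.integrable hg.integrable fun p => ?_
  by_cases hp : p ∈ Ω
  · exact h p hp
  · simp [hf.eq_zero_of_notMem hp, hg.eq_zero_of_notMem hp]

variable [FiniteDimensional ℝ E] [μ.IsAddHaarMeasure]

theorem integral_mul_fderiv (hg : IsTestFunction Ω g) (hf : ContDiff ℝ ∞ f) (v : E) :
    ∫ p, f p * fderiv ℝ g p v ∂μ = -∫ p, fderiv ℝ f p v * g p ∂μ :=
  integral_mul_fderiv_eq_neg_fderiv_mul_of_integrable
    (hg.contDiff_mul ((hf.fderiv_right (by simp)).clm_apply contDiff_const)).integrable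
    ((hg.fderiv_apply contDiff_const).contDiff_mul hf).integrable
    (hg.contDiff_mul hf).integrable
    (fun p _ => hf.differentiable (by simp) p) (fun p _ => hg.differentiableAt p)

/-- The divergence of the linear vector field `p ↦ A p` is the trace of `A`. -/
theorem integral_fderiv_clm_apply (hf : IsTestFunction Ω f) (A : E →L[ℝ] E) :
    ∫ p, fderiv ℝ f p (A p) ∂μ = -LinearMap.trace ℝ E A * ∫ p, f p ∂μ := by
  classical
  let e := Module.finBasis ℝ E
  let coord i : E →L[ℝ] ℝ := (e.coord i).toContinuousLinearMap
  have hexpand (p : E) : fderiv ℝ f p (A p) = ∑ i, coord i p * fderiv ℝ f p (A (e i)) := by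
    conv_lhs => rw [← e.sum_repr p, map_sum, map_sum]
    simp [coord]
  have hcoord i : ∫ p, coord i p * fderiv ℝ f p (A (e i)) ∂μ =
      -(coord i (A (e i)) * ∫ p, f p ∂μ) := by
    rw [hf.integral_mul_fderiv (coord i).contDiff]
    simp [integral_const_mul]
  have htrace : LinearMap.trace ℝ E A = ∑ i, coord i (A (e i)) := by
    simp [LinearMap.trace_eq_matrix_trace ℝ e, Matrix.trace, LinearMap.toMatrix_apply, coord]
  simp_rw [hexpand]
  rw [integral_finsetSum _ fun i _ =>
    ((hf.fderiv_apply contDiff_const).contDiff_mul (coord i).contDiff).integrable]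
  simp_rw [hcoord, htrace, Finset.sum_neg_distrib, ← Finset.sum_mul, neg_mul]

end IsTestFunction

end TestFunction

theorem fderiv_fderiv_clm_apply {E F : Type*} [NormedAddCommGroup E] [NormedSpace ℝ E]
    [NormedAddCommGroup F] [NormedSpace ℝ F] {f : E → F} {p : E} (hf : ContDiffAt ℝ 2 f p)
    (A : E →L[ℝ] E) (v : E) :
    fderiv ℝ (fun q => fderiv ℝ f q (A q)) p v =
      fderiv ℝ (fun q => fderiv ℝ f q v) p (A p) + fderiv ℝ f p (A v) := by
  have hd : DifferentiableAt ℝ (fderiv ℝ f) p :=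
    (hf.fderiv_right (m := 1) (by norm_num)).differentiableAt one_ne_zero
  have hsymm : IsSymmSndFDerivAt ℝ f p := hf.isSymmSndFDerivAt (by simp)
  rw [fderiv_clm_apply hd A.differentiableAt, fderiv_clm_apply hd (differentiableAt_const v)]
  simpa [add_comm] using hsymm.eq v (A p)

theorem fderiv_comp_snd_mul {E : Type*} [NormedAddCommGroup E] [NormedSpace ℝ E] {f : E × ℝ → ℝ}
    {φ : ℝ → ℝ} {p : E × ℝ} (hφ : DifferentiableAt ℝ φ p.2) (hf : DifferentiableAt ℝ f p)
    (v : E × ℝ) :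
    fderiv ℝ (fun q => φ q.2 * f q) p v =
      φ p.2 * fderiv ℝ f p v + deriv φ p.2 * v.2 * f p := by
  have hsnd : HasFDerivAt Prod.snd (ContinuousLinearMap.snd ℝ E ℝ) p := hasFDerivAt_snd
  have hφ' : HasFDerivAt (fun q : E × ℝ => φ q.2) _ p :=
    hφ.hasDerivAt.comp_hasFDerivAt p hsnd
  rw [(hφ'.fun_mul hf.hasFDerivAt).fderiv]
  simp only [add_apply, smul_apply, smul_eq_mul, ContinuousLinearMap.coe_snd']
  ring

/-- Space-time `ℝⁿ × ℝ`; a point is `p = (x, t)`. -/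
abbrev SpaceTime (n : ℕ) : Type := EuclideanSpace ℝ (Fin n) × ℝ

instance isAddHaarMeasure_volume_spaceTime (n : ℕ) :
    (volume : Measure (SpaceTime n)).IsAddHaarMeasure :=
  inferInstanceAs (Measure.prod volume volume).IsAddHaarMeasure

/-- The spatial partial derivative `∂ᵢU` of a function on space-time. -/
noncomputable def spaceDeriv {n : ℕ} (i : Fin n) (U : SpaceTime n → ℝ) (p : SpaceTime n) : ℝ :=
  fderiv ℝ U p (EuclideanSpace.single i 1, 0)

/-- The time derivative `∂ₜU` of a function on space-time. -/
noncomputable def timeDeriv {n : ℕ} (U : SpaceTime n → ℝ) (p : SpaceTime n) : ℝ :=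
  fderiv ℝ U p (0, 1)

/-- The squared length `|∇U|²` of the spatial gradient. -/
noncomputable def spaceGradSq {n : ℕ} (U : SpaceTime n → ℝ) (p : SpaceTime n) : ℝ :=
  ∑ i, spaceDeriv i U p ^ 2

/-- The backward heat operator `∂ₜ + Δ`. -/
noncomputable def backwardHeat {n : ℕ} (U : SpaceTime n → ℝ) (p : SpaceTime n) : ℝ :=
  timeDeriv U p + ∑ i, spaceDeriv i (spaceDeriv i U) p

/-- The generator `(x, t) ↦ (x/2, t)` of the parabolic dilations. -/
noncomputable def dilation (n : ℕ) : SpaceTime n →L[ℝ] SpaceTime n :=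
  ((1 / 2 : ℝ) • ContinuousLinearMap.id ℝ _).prodMap (ContinuousLinearMap.id ℝ ℝ)

/-- The derivative `DU = x/2 · ∇U + t ∂ₜU` along the parabolic dilations. -/
noncomputable def dilationDeriv {n : ℕ} (U : SpaceTime n → ℝ) (p : SpaceTime n) : ℝ :=
  fderiv ℝ U p (dilation n p)

/-- The operator `LU = t ΔU - x/2 · ∇U = e^{|x|²/4t} div(t e^{-|x|²/4t} ∇U)`. -/
noncomputable def driftLap {n : ℕ} (U : SpaceTime n → ℝ) (p : SpaceTime n) : ℝ :=
  ∑ i, (p.2 * spaceDeriv i (spaceDeriv i U) p - p.1 i / 2 * spaceDeriv i U p)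

/-- The weight `ω(x, t) = h(t)^{-2b} e^{-|x|²/4t}`. -/
noncomputable def carlemanWeight {n : ℕ} (b : ℝ) (p : SpaceTime n) : ℝ :=
  hfun p.2 ^ (-(2 * b)) * exp (-‖p.1‖ ^ 2 / (4 * p.2))

/-- The integral `∫ ω F` of a function on space-time against the weight `carlemanWeight b`. -/
noncomputable def carlemanIntegral {n : ℕ} (b : ℝ) (F : SpaceTime n → ℝ) : ℝ :=
  ∫ p, carlemanWeight b p * F p

/-- The function `σ(t)` that makes `D + σ` skew-symmetric with respect to `carlemanIntegral b`:
`2σ ω` is the divergence of `ω` times the dilation field. -/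
noncomputable def skewCoeff (n : ℕ) (b t : ℝ) : ℝ := n / 4 + 1 / 2 - b + b * t / 3

/-- The skew-symmetric part `Y = D + σ` of `t (∂ₜ + Δ)` with respect to `carlemanIntegral b`. -/
noncomputable def skewPart {n : ℕ} (b : ℝ) (U : SpaceTime n → ℝ) (p : SpaceTime n) : ℝ :=
  dilationDeriv U p + skewCoeff n b p.2 * U p

/-- The symmetric part `S = L - σ` of `t (∂ₜ + Δ)` with respect to `carlemanIntegral b`. -/
noncomputable def symmPart {n : ℕ} (b : ℝ) (U : SpaceTime n → ℝ) (p : SpaceTime n) : ℝ :=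
  driftLap U p - skewCoeff n b p.2 * U p

section Operators

variable {n : ℕ} {U : SpaceTime n → ℝ} {p : SpaceTime n}

theorem fst_dilation (p : SpaceTime n) : (dilation n p).1 = (1 / 2 : ℝ) • p.1 :=
  rfl

theorem snd_dilation (p : SpaceTime n) : (dilation n p).2 = p.2 :=
  rfl

theorem trace_dilation (n : ℕ) : LinearMap.trace ℝ (SpaceTime n) (dilation n) = n / 2 + 1 := by
  have h : (dilation n : SpaceTime n →ₗ[ℝ] SpaceTime n) =
      ((1 / 2 : ℝ) • LinearMap.id).prodMap LinearMap.id := rfl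
  rw [h, LinearMap.trace_prodMap', map_smul, LinearMap.trace_id, LinearMap.trace_id]
  simp only [smul_eq_mul, finrank_euclideanSpace, Fintype.card_fin, Module.finrank_self,
    Nat.cast_one]
  ring

theorem dilationDeriv_eq (U : SpaceTime n → ℝ) (p : SpaceTime n) :
    dilationDeriv U p = ∑ i, p.1 i / 2 * spaceDeriv i U p + p.2 * timeDeriv U p := by
  have hx : p.1 = ∑ i, p.1 i • EuclideanSpace.single i (1 : ℝ) := by
    conv_lhs => rw [← (EuclideanSpace.basisFun (Fin n) ℝ).sum_repr p.1]
    simp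
  have hdil : dilation n p = ∑ i, (p.1 i / 2) • ((EuclideanSpace.single i 1, 0) : SpaceTime n) +
      p.2 • ((0, 1) : SpaceTime n) := by
    refine Prod.ext ?_ ?_
    · simp only [Prod.fst_add, Prod.fst_sum, Prod.smul_mk, smul_zero, add_zero]
      conv_lhs => rw [fst_dilation, hx, Finset.smul_sum]
      exact Finset.sum_congr rfl fun i _ => by rw [smul_smul, one_div_mul_eq_div]
    · simp [snd_dilation, Prod.snd_sum]
  simp only [dilationDeriv, spaceDeriv, timeDeriv, hdil, map_add, map_sum, map_smul, smul_eq_mul]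

theorem symmPart_add_skewPart (b : ℝ) (U : SpaceTime n → ℝ) (p : SpaceTime n) :
    symmPart b U p + skewPart b U p = p.2 * backwardHeat U p := by
  simp only [symmPart, skewPart, driftLap, backwardHeat, dilationDeriv_eq, Finset.sum_sub_distrib,
    mul_add, Finset.mul_sum]
  ring

theorem spaceDeriv_comp_snd_mul {φ : ℝ → ℝ} (hφ : DifferentiableAt ℝ φ p.2)
    (hU : DifferentiableAt ℝ U p) (i : Fin n) :
    spaceDeriv i (fun q => φ q.2 * U q) p = φ p.2 * spaceDeriv i U p := by
  simp [spaceDeriv, fderiv_comp_snd_mul hφ hU]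

theorem skewPart_comp_snd_mul (b : ℝ) {φ : ℝ → ℝ} (hφ : DifferentiableAt ℝ φ p.2)
    (hU : DifferentiableAt ℝ U p) :
    skewPart b (fun q => φ q.2 * U q) p = φ p.2 * skewPart b U p + p.2 * deriv φ p.2 * U p := by
  rw [skewPart, skewPart, dilationDeriv, dilationDeriv, fderiv_comp_snd_mul hφ hU,
    snd_dilation]
  ring

theorem spaceDeriv_dilationDeriv (hU : ContDiffAt ℝ 2 U p) (i : Fin n) :
    spaceDeriv i (dilationDeriv U) p =
      dilationDeriv (spaceDeriv i U) p + 1 / 2 * spaceDeriv i U p := by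
  have h := fderiv_fderiv_clm_apply hU (dilation n) (EuclideanSpace.single i 1, 0)
  have hdil : dilation n (EuclideanSpace.single i 1, 0) =
      (1 / 2 : ℝ) • ((EuclideanSpace.single i 1, 0) : SpaceTime n) := by
    simp [dilation]
  rw [hdil, map_smul, smul_eq_mul] at h
  exact h

theorem contDiff_skewCoeff (n : ℕ) (b : ℝ) : ContDiff ℝ ∞ (skewCoeff n b) := by
  unfold skewCoeff
  fun_prop

theorem spaceDeriv_skewPart (hU : ContDiffAt ℝ 2 U p) (b : ℝ) (i : Fin n) :
    spaceDeriv i (skewPart b U) p = skewPart b (spaceDeriv i U) p + 1 / 2 * spaceDeriv i U p := by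
  have hU' : DifferentiableAt ℝ U p := hU.differentiableAt two_ne_zero
  have hD : DifferentiableAt ℝ (dilationDeriv U) p :=
    ((hU.fderiv_right (m := 1) (by norm_num)).clm_apply
      (dilation n).contDiff.contDiffAt).differentiableAt one_ne_zero
  have hσ : Differentiable ℝ (skewCoeff n b) := (contDiff_skewCoeff n b).differentiable (by simp)
  have hadd : spaceDeriv i (skewPart b U) p =
      spaceDeriv i (dilationDeriv U) p + spaceDeriv i (fun q => skewCoeff n b q.2 * U q) p :=
    DFunLike.congr_fun (fderiv_fun_add hD ((hσ.comp differentiable_snd p).mul hU')) _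
  rw [hadd, spaceDeriv_dilationDeriv hU, spaceDeriv_comp_snd_mul (hσ _) hU', skewPart]
  ring

end Operators

section Weight

variable {n : ℕ} {F : SpaceTime n → ℝ} {p : SpaceTime n}

theorem hfun_pos {t : ℝ} (ht : 0 < t) : 0 < hfun t :=
  mul_pos ht (exp_pos _)

theorem hasDerivAt_hfun_rpow (r : ℝ) {t : ℝ} (ht : 0 < t) :
    HasDerivAt (fun s => hfun s ^ r) (r * (1 / t - 1 / 3) * hfun t ^ r) t := by
  have hexp : HasDerivAt (fun s : ℝ => exp ((1 - s) / 3)) (exp ((1 - t) / 3) * (-1 / 3)) t :=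
    (((hasDerivAt_id t).const_sub 1).div_const 3).exp
  have hh : HasDerivAt hfun ((1 / t - 1 / 3) * hfun t) t := by
    refine ((hasDerivAt_id t).mul hexp).congr_deriv ?_
    simp only [hfun, id]
    field_simp
    ring
  refine (hh.rpow_const (Or.inl (hfun_pos ht).ne')).congr_deriv ?_
  rw [rpow_sub_one (hfun_pos ht).ne']
  field_simp [(hfun_pos ht).ne']

theorem hasFDerivAt_gaussian {E : Type*} [NormedAddCommGroup E] [InnerProductSpace ℝ E]
    {p : E × ℝ} (hp : p.2 ≠ 0) :
    HasFDerivAt (fun q : E × ℝ => exp (-‖q.1‖ ^ 2 / (4 * q.2)))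
      (exp (-‖p.1‖ ^ 2 / (4 * p.2)) •
        ((‖p.1‖ ^ 2 / (4 * p.2 ^ 2)) • ContinuousLinearMap.snd ℝ E ℝ -
          (1 / (2 * p.2)) • (innerSL ℝ p.1).comp (ContinuousLinearMap.fst ℝ E ℝ))) p := by
  have hfst : HasFDerivAt Prod.fst (ContinuousLinearMap.fst ℝ E ℝ) p := hasFDerivAt_fst
  have hsnd : HasFDerivAt Prod.snd (ContinuousLinearMap.snd ℝ E ℝ) p := hasFDerivAt_snd
  have hnum : HasFDerivAt (fun q : E × ℝ => -‖q.1‖ ^ 2) _ p := hfst.norm_sq.neg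
  have hden : HasFDerivAt (fun q : E × ℝ => (4 * q.2)⁻¹) _ p :=
    (hasDerivAt_inv (mul_ne_zero four_ne_zero hp)).comp_hasFDerivAt p (hsnd.const_mul 4)
  simp only [div_eq_mul_inv]
  refine (hnum.mul hden).exp.congr_fderiv ?_
  module

theorem carlemanWeight_pos (b : ℝ) (hp : 0 < p.2) : 0 < carlemanWeight b p :=
  mul_pos (rpow_pos_of_pos (hfun_pos hp) _) (exp_pos _)

theorem hasFDerivAt_carlemanWeight (b : ℝ) (hp : 0 < p.2) :
    HasFDerivAt (carlemanWeight b)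
      (carlemanWeight b p •
        ((‖p.1‖ ^ 2 / (4 * p.2 ^ 2) - 2 * b * (1 / p.2 - 1 / 3)) • ContinuousLinearMap.snd ℝ _ ℝ -
          (1 / (2 * p.2)) • (innerSL ℝ p.1).comp (ContinuousLinearMap.fst ℝ _ ℝ))) p := by
  have hsnd : HasFDerivAt Prod.snd (ContinuousLinearMap.snd ℝ _ ℝ) p := hasFDerivAt_snd
  have hh : HasFDerivAt (fun q : SpaceTime n => hfun q.2 ^ (-(2 * b))) _ p :=
    (hasDerivAt_hfun_rpow (-(2 * b)) hp).comp_hasFDerivAt p hsnd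
  refine (hh.mul (hasFDerivAt_gaussian hp.ne')).congr_fderiv ?_
  simp only [carlemanWeight]
  module

theorem contDiffAt_carlemanWeight (b : ℝ) (hp : 0 < p.2) : ContDiffAt ℝ ∞ (carlemanWeight b) p := by
  have hh : ContDiff ℝ ∞ fun q : SpaceTime n => hfun q.2 := by
    unfold hfun
    fun_prop
  refine (hh.contDiffAt.rpow_const_of_ne (hfun_pos hp).ne').mul (ContDiffAt.exp ?_)
  exact (contDiffAt_fst.norm_sq ℝ).neg.div (contDiffAt_const.mul contDiffAt_snd)
    (mul_ne_zero four_ne_zero hp.ne')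

theorem spaceDeriv_carlemanWeight (b : ℝ) (hp : 0 < p.2) (i : Fin n) :
    spaceDeriv i (carlemanWeight b) p = -(p.1 i / (2 * p.2)) * carlemanWeight b p := by
  rw [spaceDeriv, (hasFDerivAt_carlemanWeight b hp).fderiv]
  simp only [smul_apply, sub_apply, ContinuousLinearMap.coe_snd', ContinuousLinearMap.comp_apply,
    ContinuousLinearMap.coe_fst', innerSL_apply_apply, EuclideanSpace.inner_single_right,
    smul_eq_mul, conj_trivial]
  ring

theorem dilationDeriv_carlemanWeight (b : ℝ) (hp : 0 < p.2) :
    dilationDeriv (carlemanWeight b) p = -(2 * b * (1 - p.2 / 3)) * carlemanWeight b p := by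
  rw [dilationDeriv, (hasFDerivAt_carlemanWeight b hp).fderiv]
  simp only [smul_apply, sub_apply, ContinuousLinearMap.coe_snd', ContinuousLinearMap.comp_apply,
    ContinuousLinearMap.coe_fst', innerSL_apply_apply, fst_dilation, snd_dilation,
    inner_smul_right, real_inner_self_eq_norm_sq, smul_eq_mul]
  field_simp
  ring

theorem dilationDeriv_carlemanWeight_mul (b : ℝ) (hp : 0 < p.2) (hF : DifferentiableAt ℝ F p) :
    dilationDeriv (fun q => carlemanWeight b q * F q) p =
      carlemanWeight b p * (dilationDeriv F p + 2 * skewCoeff n b p.2 * F p) -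
        (n / 2 + 1) * (carlemanWeight b p * F p) := by
  have hmul : dilationDeriv (fun q => carlemanWeight b q * F q) p =
      carlemanWeight b p * dilationDeriv F p + F p * dilationDeriv (carlemanWeight b) p :=
    DFunLike.congr_fun
      (fderiv_fun_mul (hasFDerivAt_carlemanWeight b hp).differentiableAt hF) _
  rw [hmul, dilationDeriv_carlemanWeight b hp, skewCoeff]
  ring

theorem carlemanWeight_eq_mul_sq (a : ℝ) (hp : 0 < p.2) :
    carlemanWeight a p = carlemanWeight (a + 1) p * hfun p.2 ^ 2 := by
  rw [carlemanWeight, carlemanWeight, show -(2 * a) = -(2 * (a + 1)) + 2 by ring,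
    rpow_add (hfun_pos hp), rpow_two]
  ring

end Weight

section CarlemanIntegral

variable {n : ℕ} {b : ℝ} {Ω : Set (SpaceTime n)} {U F G : SpaceTime n → ℝ}

theorem IsTestFunction.spaceDeriv (hU : IsTestFunction Ω U) (i : Fin n) :
    IsTestFunction Ω (spaceDeriv i U) :=
  hU.fderiv_apply contDiff_const

theorem IsTestFunction.backwardHeat (hU : IsTestFunction Ω U) :
    IsTestFunction Ω (backwardHeat U) :=
  (hU.fderiv_apply contDiff_const).add (.sum fun i _ => (hU.spaceDeriv i).spaceDeriv i)

theorem IsTestFunction.spaceGradSq (hU : IsTestFunction Ω U) : IsTestFunction Ω (spaceGradSq U) :=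
  .sum fun i _ => (hU.spaceDeriv i).sq

theorem IsTestFunction.comp_snd_mul (hU : IsTestFunction Ω U) {φ : ℝ → ℝ} (hφ : ContDiff ℝ ∞ φ) :
    IsTestFunction Ω fun p => φ p.2 * U p :=
  hU.contDiff_mul (hφ.comp contDiff_snd)

theorem IsTestFunction.snd_mul (hU : IsTestFunction Ω U) : IsTestFunction Ω fun p => p.2 * U p :=
  hU.comp_snd_mul contDiff_id

theorem IsTestFunction.dilationDeriv (hU : IsTestFunction Ω U) :
    IsTestFunction Ω (dilationDeriv U) :=
  hU.fderiv_apply (dilation n).contDiff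

theorem IsTestFunction.skewPart (hU : IsTestFunction Ω U) (b : ℝ) :
    IsTestFunction Ω (skewPart b U) :=
  hU.dilationDeriv.add (hU.comp_snd_mul (contDiff_skewCoeff n b))

theorem IsTestFunction.driftLap (hU : IsTestFunction Ω U) : IsTestFunction Ω (driftLap U) :=
  .sum fun i _ => ((hU.spaceDeriv i).spaceDeriv i).snd_mul.sub
    ((hU.spaceDeriv i).contDiff_mul (by fun_prop))

theorem IsTestFunction.symmPart (hU : IsTestFunction Ω U) (b : ℝ) :
    IsTestFunction Ω (symmPart b U) :=
  hU.driftLap.sub (hU.comp_snd_mul (contDiff_skewCoeff n b))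

theorem carlemanIntegral_const_mul (c : ℝ) (F : SpaceTime n → ℝ) :
    carlemanIntegral b (fun p => c * F p) = c * carlemanIntegral b F := by
  simp only [carlemanIntegral, mul_left_comm _ c, integral_const_mul]

theorem IsTestFunction.carlemanWeight_mul (hΩ : ∀ p ∈ Ω, 0 < p.2)
    (hF : IsTestFunction Ω F) (b : ℝ) :
    IsTestFunction Ω fun p => carlemanWeight b p * F p :=
  hF.contDiffAt_mul fun p hp => contDiffAt_carlemanWeight b (hΩ p hp)

theorem isTestFunction_div_mul_sq_add_spaceGradSq (hΩ : ∀ p ∈ Ω, 0 < p.2)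
    (hU : IsTestFunction Ω U) (κ : ℝ) :
    IsTestFunction Ω fun p => κ / p.2 * U p ^ 2 + spaceGradSq U p :=
  (hU.sq.contDiffAt_mul fun p hp => contDiffAt_const.div contDiffAt_snd (hΩ p hp).ne').add
    hU.spaceGradSq

theorem carlemanIntegral_add (hΩ : ∀ p ∈ Ω, 0 < p.2)
    (hF : IsTestFunction Ω F) (hG : IsTestFunction Ω G) :
    carlemanIntegral b (fun p => F p + G p) = carlemanIntegral b F + carlemanIntegral b G := by
  simp only [carlemanIntegral, mul_add]
  exact integral_add (hF.carlemanWeight_mul hΩ b).integrable (hG.carlemanWeight_mul hΩ b).integrable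

theorem carlemanIntegral_sub (hΩ : ∀ p ∈ Ω, 0 < p.2)
    (hF : IsTestFunction Ω F) (hG : IsTestFunction Ω G) :
    carlemanIntegral b (fun p => F p - G p) = carlemanIntegral b F - carlemanIntegral b G := by
  simp only [carlemanIntegral, mul_sub]
  exact integral_sub (hF.carlemanWeight_mul hΩ b).integrable (hG.carlemanWeight_mul hΩ b).integrable

theorem carlemanIntegral_sum (hΩ : ∀ p ∈ Ω, 0 < p.2)
    {ι : Type*} {s : Finset ι} {F : ι → SpaceTime n → ℝ}
    (hF : ∀ i ∈ s, IsTestFunction Ω (F i)) :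
    carlemanIntegral b (fun p => ∑ i ∈ s, F i p) = ∑ i ∈ s, carlemanIntegral b (F i) := by
  simp only [carlemanIntegral, Finset.mul_sum]
  exact integral_finsetSum s fun i hi => ((hF i hi).carlemanWeight_mul hΩ b).integrable

theorem carlemanIntegral_mono (hΩ : ∀ p ∈ Ω, 0 < p.2)
    (hF : IsTestFunction Ω F) (hG : IsTestFunction Ω G) (h : ∀ p ∈ Ω, F p ≤ G p) :
    carlemanIntegral b F ≤ carlemanIntegral b G :=
  (hF.carlemanWeight_mul hΩ b).integral_mono_on (hG.carlemanWeight_mul hΩ b) fun p hp =>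
    mul_le_mul_of_nonneg_left (h p hp) (carlemanWeight_pos b (hΩ p hp)).le

end CarlemanIntegral

section IntegrationByParts

variable {n : ℕ} {b : ℝ} {Ω : Set (SpaceTime n)} {U V F : SpaceTime n → ℝ}

theorem carlemanIntegral_dilationDeriv (hΩ : ∀ p ∈ Ω, 0 < p.2) (hF : IsTestFunction Ω F) :
    carlemanIntegral b (dilationDeriv F) =
      -carlemanIntegral b (fun p => 2 * skewCoeff n b p.2 * F p) := by
  have hσF : IsTestFunction Ω fun p => 2 * skewCoeff n b p.2 * F p :=
    hF.comp_snd_mul (contDiff_const.mul (contDiff_skewCoeff n b))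
  have hωF := hF.carlemanWeight_mul hΩ b
  have hωF' := hωF.contDiff_mul (contDiff_const (c := (n / 2 + 1 : ℝ)))
  have hωDF := (hF.dilationDeriv.add hσF).carlemanWeight_mul hΩ b
  have hleibniz : dilationDeriv (fun p => carlemanWeight b p * F p) = fun p =>
      carlemanWeight b p * (dilationDeriv F p + 2 * skewCoeff n b p.2 * F p) -
        (n / 2 + 1) * (carlemanWeight b p * F p) :=
    hωF.dilationDeriv.ext_on (hωDF.sub hωF') fun p hp =>
      dilationDeriv_carlemanWeight_mul b (hΩ p hp) (hF.differentiableAt p)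
  have hdiv : ∫ p, dilationDeriv (fun p => carlemanWeight b p * F p) p =
      -(n / 2 + 1) * ∫ p, carlemanWeight b p * F p := by
    rw [← trace_dilation]
    exact hωF.integral_fderiv_clm_apply (dilation n)
  rw [hleibniz, integral_sub hωDF.integrable hωF'.integrable, integral_const_mul, neg_mul,
    sub_eq_neg_self] at hdiv
  rw [eq_neg_iff_add_eq_zero, ← carlemanIntegral_add hΩ hF.dilationDeriv hσF]
  exact hdiv

theorem carlemanIntegral_skewPart_mul (hΩ : ∀ p ∈ Ω, 0 < p.2)
    (hU : IsTestFunction Ω U) (hV : IsTestFunction Ω V) :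
    carlemanIntegral b (fun p => skewPart b U p * V p) =
      -carlemanIntegral b (fun p => U p * skewPart b V p) := by
  have hUV := hU.mul hV
  have hleibniz (p : SpaceTime n) : dilationDeriv (fun p => U p * V p) p +
      2 * skewCoeff n b p.2 * (U p * V p) = skewPart b U p * V p + U p * skewPart b V p := by
    have hmul : dilationDeriv (fun p => U p * V p) p =
        U p * dilationDeriv V p + V p * dilationDeriv U p :=
      DFunLike.congr_fun (fderiv_fun_mul (hU.differentiableAt p) (hV.differentiableAt p)) _
    rw [hmul, skewPart, skewPart]
    ring
  rw [eq_neg_iff_add_eq_zero, ← carlemanIntegral_add hΩ ((hU.skewPart b).mul hV)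
    (hU.mul (hV.skewPart b))]
  simp_rw [← hleibniz]
  rw [carlemanIntegral_add hΩ hUV.dilationDeriv
    (hUV.comp_snd_mul (contDiff_const.mul (contDiff_skewCoeff n b))),
    carlemanIntegral_dilationDeriv hΩ hUV, neg_add_cancel]

theorem carlemanIntegral_comp_snd_mul_mul_skewPart (hΩ : ∀ p ∈ Ω, 0 < p.2)
    (hU : IsTestFunction Ω U) {φ : ℝ → ℝ} (hφ : ContDiff ℝ ∞ φ) :
    carlemanIntegral b (fun p => φ p.2 * U p * skewPart b U p) =
      -(1 / 2) * carlemanIntegral b (fun p => p.2 * deriv φ p.2 * U p ^ 2) := by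
  have hφ' : ContDiff ℝ ∞ fun t => t * deriv φ t :=
    contDiff_id.mul (contDiff_infty_iff_deriv.1 hφ).2
  have hskew := carlemanIntegral_skewPart_mul (b := b) hΩ hU (hU.comp_snd_mul hφ)
  have hcomm (p : SpaceTime n) : U p * skewPart b (fun q => φ q.2 * U q) p =
      φ p.2 * U p * skewPart b U p + p.2 * deriv φ p.2 * U p ^ 2 := by
    rw [skewPart_comp_snd_mul b (hφ.differentiable (by simp) _) (hU.differentiableAt p)]
    ring
  simp_rw [hcomm] at hskew
  rw [carlemanIntegral_add hΩ ((hU.comp_snd_mul hφ).mul (hU.skewPart b))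
    (hU.sq.comp_snd_mul hφ')] at hskew
  simp_rw [mul_comm (skewPart b U _)] at hskew
  linarith

theorem carlemanIntegral_snd_mul_mul_spaceDeriv (hΩ : ∀ p ∈ Ω, 0 < p.2) (hF : IsTestFunction Ω F)
    (hV : IsTestFunction Ω V) (i : Fin n) :
    carlemanIntegral b (fun p => p.2 * F p * spaceDeriv i V p) =
      -carlemanIntegral b (fun p => (p.2 * spaceDeriv i F p - p.1 i / 2 * F p) * V p) := by
  have htF : IsTestFunction Ω fun p => p.2 * F p := hF.snd_mul
  have hparts := hV.integral_mul_fderiv (μ := volume) (htF.carlemanWeight_mul hΩ b).contDiff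
    (EuclideanSpace.single i 1, 0)
  refine (integral_congr_ae (.of_forall fun p => (mul_assoc _ _ _).symm)).trans
    (hparts.trans (congrArg Neg.neg (integral_congr_ae (.of_forall fun p => ?_))))
  by_cases hp : p ∈ Ω
  · have hp' := hΩ p hp
    have hmul : spaceDeriv i (fun p => carlemanWeight b p * (p.2 * F p)) p =
        carlemanWeight b p * spaceDeriv i (fun p => p.2 * F p) p +
          p.2 * F p * spaceDeriv i (carlemanWeight b) p :=
      DFunLike.congr_fun (fderiv_fun_mul (hasFDerivAt_carlemanWeight b hp').differentiableAt
        (htF.differentiableAt p)) _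
    rw [spaceDeriv_carlemanWeight b hp', spaceDeriv_comp_snd_mul (φ := fun t => t)
      differentiableAt_id (hF.differentiableAt p), spaceDeriv] at hmul
    simp only [hmul]
    field_simp
    ring
  · simp only [hV.eq_zero_of_notMem hp, mul_zero]

theorem carlemanIntegral_driftLap_mul (hΩ : ∀ p ∈ Ω, 0 < p.2)
    (hU : IsTestFunction Ω U) (hV : IsTestFunction Ω V) :
    carlemanIntegral b (fun p => driftLap U p * V p) =
      -∑ i, carlemanIntegral b (fun p => p.2 * spaceDeriv i U p * spaceDeriv i V p) := by
  have hterm (i : Fin n) : IsTestFunction Ω fun p =>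
      (p.2 * spaceDeriv i (spaceDeriv i U) p - p.1 i / 2 * spaceDeriv i U p) * V p :=
    (((hU.spaceDeriv i).spaceDeriv i).snd_mul.sub
      ((hU.spaceDeriv i).contDiff_mul (by fun_prop))).mul hV
  simp only [driftLap, Finset.sum_mul]
  rw [carlemanIntegral_sum hΩ fun i _ => hterm i, ← Finset.sum_neg_distrib]
  refine Finset.sum_congr rfl fun i _ => ?_
  rw [carlemanIntegral_snd_mul_mul_spaceDeriv hΩ (hU.spaceDeriv i) hV, neg_neg]

theorem carlemanIntegral_driftLap_mul_skewPart (hΩ : ∀ p ∈ Ω, 0 < p.2) (hU : IsTestFunction Ω U) :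
    carlemanIntegral b (fun p => driftLap U p * skewPart b U p) = 0 := by
  rw [carlemanIntegral_driftLap_mul hΩ hU (hU.skewPart b), neg_eq_zero]
  refine Finset.sum_eq_zero fun i _ => ?_
  have hUi := hU.spaceDeriv i
  have hsq : IsTestFunction Ω fun p => 1 / 2 * (p.2 * spaceDeriv i U p ^ 2) :=
    hUi.sq.snd_mul.contDiff_mul contDiff_const
  have hskew := carlemanIntegral_comp_snd_mul_mul_skewPart (b := b) hΩ hUi contDiff_id
  have hcomm (p : SpaceTime n) : p.2 * spaceDeriv i U p * spaceDeriv i (skewPart b U) p =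
      p.2 * spaceDeriv i U p * skewPart b (spaceDeriv i U) p +
        1 / 2 * (p.2 * spaceDeriv i U p ^ 2) := by
    rw [spaceDeriv_skewPart (contDiff_infty.1 hU.contDiff 2).contDiffAt]
    ring
  simp only [id, deriv_id, mul_one] at hskew
  simp_rw [hcomm]
  rw [carlemanIntegral_add hΩ (hUi.snd_mul.mul (hUi.skewPart b)) hsq, hskew,
    carlemanIntegral_const_mul]
  ring

/-- Since `L` commutes with `Y`, the commutator of `S` and `Y` is `[D, σ] = t σ' = b t / 3`. -/
theorem carlemanIntegral_symmPart_mul_skewPart (hΩ : ∀ p ∈ Ω, 0 < p.2) (hU : IsTestFunction Ω U) :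
    carlemanIntegral b (fun p => symmPart b U p * skewPart b U p) =
      b / 6 * carlemanIntegral b (fun p => p.2 * U p ^ 2) := by
  have hσ := carlemanIntegral_comp_snd_mul_mul_skewPart (b := b) hΩ hU (contDiff_skewCoeff n b)
  have hσ' (t : ℝ) : deriv (skewCoeff n b) t = b / 3 := by
    have h : HasDerivAt (skewCoeff n b) (b * 1 / 3) t :=
      (((hasDerivAt_id t).const_mul b).div_const 3).const_add _
    rw [h.deriv, mul_one]
  simp_rw [hσ', mul_comm _ (b / 3), mul_assoc (b / 3)] at hσ
  rw [carlemanIntegral_const_mul] at hσ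
  simp only [symmPart, sub_mul]
  rw [carlemanIntegral_sub hΩ (hU.driftLap.mul (hU.skewPart b))
    ((hU.comp_snd_mul (contDiff_skewCoeff n b)).mul (hU.skewPart b)),
    carlemanIntegral_driftLap_mul_skewPart hΩ hU, hσ]
  ring

theorem carlemanIntegral_snd_sq_mul_spaceGradSq (hΩ : ∀ p ∈ Ω, 0 < p.2) (hU : IsTestFunction Ω U) :
    carlemanIntegral b (fun p => p.2 ^ 2 * spaceGradSq U p) =
      -carlemanIntegral b (fun p => p.2 * U p * (p.2 * backwardHeat U p) +
        (skewCoeff n b p.2 + 1 / 2) * (p.2 * U p ^ 2)) := by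
  have hgrad : carlemanIntegral b (fun p => driftLap U p * (p.2 * U p)) =
      -carlemanIntegral b (fun p => p.2 ^ 2 * spaceGradSq U p) := by
    have hsq (i : Fin n) : IsTestFunction Ω fun p => p.2 * spaceDeriv i U p *
        spaceDeriv i (fun q => q.2 * U q) p :=
      (hU.spaceDeriv i).snd_mul.mul (hU.snd_mul.spaceDeriv i)
    rw [carlemanIntegral_driftLap_mul hΩ hU hU.snd_mul, ← carlemanIntegral_sum hΩ fun i _ => hsq i]
    refine congrArg (fun F => -carlemanIntegral b F) (funext fun p => ?_)
    rw [spaceGradSq, Finset.mul_sum]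
    refine Finset.sum_congr rfl fun i _ => ?_
    rw [spaceDeriv_comp_snd_mul (φ := fun t => t) differentiableAt_id (hU.differentiableAt p)]
    ring
  have hskew := carlemanIntegral_comp_snd_mul_mul_skewPart (b := b) hΩ hU contDiff_id
  simp only [id, deriv_id, mul_one] at hskew
  have hsplit (p : SpaceTime n) : p.2 * U p * (p.2 * backwardHeat U p) +
      (skewCoeff n b p.2 + 1 / 2) * (p.2 * U p ^ 2) =
      driftLap U p * (p.2 * U p) + (p.2 * U p * skewPart b U p + 1 / 2 * (p.2 * U p ^ 2)) := by
    rw [← symmPart_add_skewPart b, symmPart]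
    ring
  have hsq : IsTestFunction Ω fun p => 1 / 2 * (p.2 * U p ^ 2) :=
    hU.sq.snd_mul.contDiff_mul contDiff_const
  have hskewU := hU.snd_mul.mul (hU.skewPart b)
  simp_rw [hsplit]
  rw [carlemanIntegral_add hΩ (hU.driftLap.mul hU.snd_mul) (hskewU.add hsq),
    carlemanIntegral_add hΩ hskewU hsq, hgrad, hskew, carlemanIntegral_const_mul]
  ring

end IntegrationByParts

section Estimates

variable {n : ℕ} {b : ℝ} {Ω : Set (SpaceTime n)} {U F : SpaceTime n → ℝ}

theorem mul_carlemanIntegral_snd_mul_sq_le (hΩ : ∀ p ∈ Ω, 0 < p.2) (hU : IsTestFunction Ω U) :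
    2 / 3 * b * carlemanIntegral b (fun p => p.2 * U p ^ 2) ≤
      carlemanIntegral b (fun p => (p.2 * backwardHeat U p) ^ 2) :=
  calc 2 / 3 * b * carlemanIntegral b (fun p => p.2 * U p ^ 2)
      = carlemanIntegral b (fun p => 4 * (symmPart b U p * skewPart b U p)) := by
        rw [carlemanIntegral_const_mul, carlemanIntegral_symmPart_mul_skewPart hΩ hU]
        ring
    _ ≤ carlemanIntegral b (fun p => (p.2 * backwardHeat U p) ^ 2) := by
        refine carlemanIntegral_mono hΩ (((hU.symmPart b).mul (hU.skewPart b)).contDiff_mul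
          contDiff_const) hU.backwardHeat.snd_mul.sq fun p _ => ?_
        rw [← symmPart_add_skewPart b, ← mul_assoc]
        exact four_mul_le_sq_add _ _

theorem carlemanIntegral_snd_sq_mul_spaceGradSq_le (hb : 0 ≤ b)
    (hΩ : ∀ p ∈ Ω, p.2 ∈ Ioo (0 : ℝ) 2) (hU : IsTestFunction Ω U) :
    carlemanIntegral b (fun p => p.2 ^ 2 * spaceGradSq U p) ≤
      b * carlemanIntegral b (fun p => p.2 * U p ^ 2) +
        1 / 2 * carlemanIntegral b (fun p => (p.2 * backwardHeat U p) ^ 2) := by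
  have hΩ' : ∀ p ∈ Ω, 0 < p.2 := fun p hp => (hΩ p hp).1
  have hU2 := hU.sq.snd_mul
  have hP2 := hU.backwardHeat.snd_mul.sq
  have hσ : ContDiff ℝ ∞ fun t => skewCoeff n b t + 1 / 2 :=
    (contDiff_skewCoeff n b).add contDiff_const
  have hbound : IsTestFunction Ω fun p =>
      b * (p.2 * U p ^ 2) + 1 / 2 * (p.2 * backwardHeat U p) ^ 2 :=
    (hU2.contDiff_mul contDiff_const).add (hP2.contDiff_mul contDiff_const)
  rw [carlemanIntegral_snd_sq_mul_spaceGradSq hΩ' hU, ← neg_one_mul,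
    ← carlemanIntegral_const_mul, ← carlemanIntegral_const_mul, ← carlemanIntegral_const_mul,
    ← carlemanIntegral_add hΩ' (hU2.contDiff_mul contDiff_const) (hP2.contDiff_mul contDiff_const)]
  refine carlemanIntegral_mono hΩ' (((hU.snd_mul.mul hU.backwardHeat.snd_mul).add
    (hU2.comp_snd_mul hσ)).contDiff_mul contDiff_const) hbound fun p hp => ?_
  obtain ⟨ht0, ht2⟩ := hΩ p hp
  have hcs : 0 ≤ (p.2 * U p + p.2 * backwardHeat U p) ^ 2 := sq_nonneg _
  have ht : 0 ≤ p.2 * (2 - p.2) * U p ^ 2 := by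
    have := sub_pos.2 ht2
    positivity
  have hσ0 : 0 ≤ (n / 4 + b * p.2 / 3) * (p.2 * U p ^ 2) := by positivity
  simp only [skewCoeff]
  linarith

theorem carlemanIntegral_mul_sq_add_spaceGradSq_le (hb : 0 ≤ b)
    (hΩ : ∀ p ∈ Ω, p.2 ∈ Ioo (0 : ℝ) 2) (hU : IsTestFunction Ω U) :
    carlemanIntegral b (fun p => b * (p.2 * U p ^ 2) + p.2 ^ 2 * spaceGradSq U p) ≤
      7 / 2 * carlemanIntegral b (fun p => (p.2 * backwardHeat U p) ^ 2) := by
  have hΩ' : ∀ p ∈ Ω, 0 < p.2 := fun p hp => (hΩ p hp).1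
  have hgradSq : IsTestFunction Ω fun p => p.2 ^ 2 * spaceGradSq U p :=
    hU.spaceGradSq.comp_snd_mul (contDiff_id.pow 2)
  rw [carlemanIntegral_add hΩ' (hU.sq.snd_mul.contDiff_mul contDiff_const) hgradSq,
    carlemanIntegral_const_mul]
  linarith [mul_carlemanIntegral_snd_mul_sq_le (b := b) hΩ' hU,
    carlemanIntegral_snd_sq_mul_spaceGradSq_le hb hΩ hU]

theorem hfun_sq_le {t : ℝ} (ht : 0 ≤ t) : hfun t ^ 2 ≤ exp (2 / 3) * t ^ 2 := by
  rw [hfun, mul_pow, ← exp_nat_mul, mul_comm]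
  gcongr
  push_cast
  linarith

theorem sq_le_hfun_sq {t : ℝ} (ht : t ≤ 2) : t ^ 2 ≤ exp (2 / 3) * hfun t ^ 2 := by
  rw [hfun, mul_pow, ← exp_nat_mul, mul_left_comm, ← exp_add]
  refine le_mul_of_one_le_right (sq_nonneg t) (one_le_exp ?_)
  push_cast
  linarith

theorem carlemanIntegral_le_snd_sq_mul (a : ℝ) (hΩ : ∀ p ∈ Ω, 0 < p.2)
    (hF : IsTestFunction Ω F) (hF0 : ∀ p ∈ Ω, 0 ≤ F p) :
    carlemanIntegral a F ≤ exp (2 / 3) * carlemanIntegral (a + 1) (fun p => p.2 ^ 2 * F p) := by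
  rw [← carlemanIntegral_const_mul]
  refine (hF.carlemanWeight_mul hΩ a).integral_mono_on (((hF.comp_snd_mul
    (contDiff_id.pow 2)).contDiff_mul contDiff_const).carlemanWeight_mul hΩ (a + 1)) fun p hp => ?_
  have hω := (carlemanWeight_pos (a + 1) (hΩ p hp)).le
  have hF0p := hF0 p hp
  calc carlemanWeight a p * F p = carlemanWeight (a + 1) p * (hfun p.2 ^ 2 * F p) := by
        rw [carlemanWeight_eq_mul_sq a (hΩ p hp), mul_assoc]
    _ ≤ carlemanWeight (a + 1) p * (exp (2 / 3) * p.2 ^ 2 * F p) := by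
        gcongr
        exact hfun_sq_le (hΩ p hp).le
    _ = carlemanWeight (a + 1) p * (exp (2 / 3) * (p.2 ^ 2 * F p)) := by
        rw [mul_assoc (exp _)]

theorem carlemanIntegral_snd_sq_mul_le (a : ℝ) (hΩ : ∀ p ∈ Ω, p.2 ∈ Ioo (0 : ℝ) 2)
    (hF : IsTestFunction Ω F) (hF0 : ∀ p ∈ Ω, 0 ≤ F p) :
    carlemanIntegral (a + 1) (fun p => p.2 ^ 2 * F p) ≤ exp (2 / 3) * carlemanIntegral a F := by
  have hΩ' : ∀ p ∈ Ω, 0 < p.2 := fun p hp => (hΩ p hp).1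
  rw [← carlemanIntegral_const_mul]
  refine ((hF.comp_snd_mul (contDiff_id.pow 2)).carlemanWeight_mul hΩ' (a + 1)).integral_mono_on
    ((hF.contDiff_mul contDiff_const).carlemanWeight_mul hΩ' a) fun p hp => ?_
  have hω := (carlemanWeight_pos (a + 1) (hΩ' p hp)).le
  have hF0p := hF0 p hp
  calc carlemanWeight (a + 1) p * (p.2 ^ 2 * F p)
      ≤ carlemanWeight (a + 1) p * (exp (2 / 3) * hfun p.2 ^ 2 * F p) := by
        gcongr
        exact sq_le_hfun_sq (hΩ p hp).2.le
    _ = carlemanWeight a p * (exp (2 / 3) * F p) := by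
        rw [carlemanWeight_eq_mul_sq a (hΩ' p hp)]
        ring

theorem carlemanIntegral_div_mul_sq_add_spaceGradSq_le {a κ : ℝ} (ha : -1 ≤ a) (hκ : κ ≤ a + 1)
    (hΩ : ∀ p ∈ Ω, p.2 ∈ Ioo (0 : ℝ) 2) (hU : IsTestFunction Ω U) :
    carlemanIntegral a (fun p => κ / p.2 * U p ^ 2 + spaceGradSq U p) ≤
      7 / 2 * exp (4 / 3) * carlemanIntegral a (fun p => backwardHeat U p ^ 2) := by
  have hΩ' : ∀ p ∈ Ω, 0 < p.2 := fun p hp => (hΩ p hp).1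
  have ha' : 0 ≤ a + 1 := by linarith
  have htest := isTestFunction_div_mul_sq_add_spaceGradSq hΩ' hU
  have hmul_sq (p : SpaceTime n) : p.2 ^ 2 * ((a + 1) / p.2 * U p ^ 2 + spaceGradSq U p) =
      (a + 1) * (p.2 * U p ^ 2) + p.2 ^ 2 * spaceGradSq U p := by
    rcases eq_or_ne p.2 0 with ht | ht
    · simp [ht]
    · field_simp
  calc carlemanIntegral a (fun p => κ / p.2 * U p ^ 2 + spaceGradSq U p)
      ≤ carlemanIntegral a (fun p => (a + 1) / p.2 * U p ^ 2 + spaceGradSq U p) :=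
        carlemanIntegral_mono hΩ' (htest κ) (htest (a + 1)) fun p hp => by
          have := hΩ' p hp
          gcongr
    _ ≤ exp (2 / 3) * carlemanIntegral (a + 1)
          (fun p => p.2 ^ 2 * ((a + 1) / p.2 * U p ^ 2 + spaceGradSq U p)) :=
        carlemanIntegral_le_snd_sq_mul a hΩ' (htest (a + 1)) fun p hp => by
          have := hΩ' p hp
          have : 0 ≤ spaceGradSq U p := Finset.sum_nonneg fun _ _ => sq_nonneg _
          positivity
    _ ≤ exp (2 / 3) * (7 / 2 * carlemanIntegral (a + 1)
          (fun p => p.2 ^ 2 * backwardHeat U p ^ 2)) := by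
        simp only [hmul_sq, ← mul_pow]
        gcongr
        exact carlemanIntegral_mul_sq_add_spaceGradSq_le ha' hΩ hU
    _ ≤ exp (2 / 3) * (7 / 2 * (exp (2 / 3) *
          carlemanIntegral a (fun p => backwardHeat U p ^ 2))) := by
        gcongr
        exact carlemanIntegral_snd_sq_mul_le a hΩ hU.backwardHeat.sq fun _ _ => sq_nonneg _
    _ = 7 / 2 * exp (4 / 3) * carlemanIntegral a (fun p => backwardHeat U p ^ 2) := by
        rw [show (4 / 3 : ℝ) = 2 / 3 + 2 / 3 by norm_num, exp_add]
        ring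

end Estimates

section Slices

variable {E F G : Type*} [NormedAddCommGroup E] [NormedSpace ℝ E] [NormedAddCommGroup F]
  [NormedSpace ℝ F] [NormedAddCommGroup G] [NormedSpace ℝ G]

theorem fderiv_slice_left {f : E × F → G} {x : E} {y : F} (hf : DifferentiableAt ℝ f (x, y))
    (v : E) : fderiv ℝ (fun z => f (z, y)) x v = fderiv ℝ f (x, y) (v, 0) := by
  have h : HasFDerivAt (fun z => f (z, y)) _ x := HasFDerivAt.comp (f := fun z => (z, y)) x
    hf.hasFDerivAt (hasFDerivAt_prodMk_left x y)
  rw [h.fderiv]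
  simp

theorem deriv_slice_right {f : E × ℝ → G} {x : E} {t : ℝ} (hf : DifferentiableAt ℝ f (x, t)) :
    deriv (fun s => f (x, s)) t = fderiv ℝ f (x, t) (0, 1) := by
  have h : HasFDerivAt (fun s => f (x, s)) _ t := HasFDerivAt.comp (f := fun s => (x, s)) t
    hf.hasFDerivAt (hasFDerivAt_prodMk_right x t)
  rw [h.hasDerivAt.deriv]
  simp

end Slices

section SpaceTimeSlices

variable {n : ℕ} {U F : SpaceTime n → ℝ}

theorem carlemanIntegral_eq_setIntegral {I : Set ℝ} (hI : I ⊆ Ioi 0) (b : ℝ)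
    (hF : IsTestFunction (univ ×ˢ I) F) :
    carlemanIntegral b F = ∫ t in I, ∫ x, hfun t ^ (-(2 * b)) * exp (-‖x‖ ^ 2 / (4 * t)) *
      F (x, t) := by
  have hωF := (hF.carlemanWeight_mul (fun p hp => hI hp.2) b).integrable (μ := volume)
  rw [carlemanIntegral]
  refine (integral_prod_symm _ hωF).trans
    (setIntegral_eq_integral_of_forall_compl_eq_zero fun t ht => ?_).symm
  simp [hF.eq_zero_of_notMem fun h : (_, t) ∈ univ ×ˢ I => ht h.2]

theorem norm_gradient_slice_sq {x : EuclideanSpace ℝ (Fin n)} {t : ℝ}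
    (hU : DifferentiableAt ℝ U (x, t)) :
    ‖gradient (fun y => U (y, t)) x‖ ^ 2 = spaceGradSq U (x, t) := by
  rw [EuclideanSpace.real_norm_sq_eq]
  refine Finset.sum_congr rfl fun i _ => congrArg (· ^ 2) ?_
  rw [spaceDeriv, ← fderiv_slice_left hU, ← toDual_gradient, InnerProductSpace.toDual_apply_apply,
    EuclideanSpace.inner_single_right]
  simp

theorem deriv_add_lap_slice (hU : ContDiff ℝ 2 U) (x : EuclideanSpace ℝ (Fin n)) (t : ℝ) :
    deriv (fun s => U (x, s)) t + lap (fun y => U (y, t)) x = backwardHeat U (x, t) := by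
  have hU' := hU.differentiable two_ne_zero
  have hUi (i : Fin n) : Differentiable ℝ (spaceDeriv i U) :=
    ((hU.fderiv_right (m := 1) (by norm_num)).clm_apply contDiff_const).differentiable one_ne_zero
  have hslice (y v : EuclideanSpace ℝ (Fin n)) :
      fderiv ℝ (fun z => U (z, t)) y v = fderiv ℝ U (y, t) (v, 0) := fderiv_slice_left (hU' _) v
  rw [deriv_slice_right (hU' _), backwardHeat, lap]
  simp only [hslice]
  exact congrArg _ (Finset.sum_congr rfl fun i _ => fderiv_slice_left (hUi i _) _)

end SpaceTimeSlices

theorem carleman_ESS_general :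
    ∃ c₀ : ℝ, 0 < c₀ ∧
      ∀ n : ℕ, ∀ a : ℝ, -1 ≤ a → ∀ κ : ℝ, κ ≤ a + 1 →
        ∀ u : EuclideanSpace ℝ (Fin n) → ℝ → ℝ,
          ContDiff ℝ (⊤ : ℕ∞) (fun p : EuclideanSpace ℝ (Fin n) × ℝ => u p.1 p.2) →
          HasCompactSupport (fun p : EuclideanSpace ℝ (Fin n) × ℝ => u p.1 p.2) →
          tsupport (fun p : EuclideanSpace ℝ (Fin n) × ℝ => u p.1 p.2) ⊆
            Set.univ ×ˢ Set.Ioo (0 : ℝ) 2 →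
          (∫ t in Set.Ioo (0 : ℝ) 2, ∫ x : EuclideanSpace ℝ (Fin n),
              hfun t ^ (-(2 * a)) * Real.exp (-‖x‖ ^ 2 / (4 * t)) *
                ((κ / t) * (u x t) ^ 2 + ‖gradient (fun y => u y t) x‖ ^ 2))
            ≤ c₀ * ∫ t in Set.Ioo (0 : ℝ) 2, ∫ x : EuclideanSpace ℝ (Fin n),
              hfun t ^ (-(2 * a)) * Real.exp (-‖x‖ ^ 2 / (4 * t)) *
                |deriv (u x) t + lap (fun y => u y t) x| ^ 2 := by
  refine ⟨7 / 2 * exp (4 / 3), by positivity, fun n a ha κ hκ u hu hc hs => ?_⟩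
  let U : SpaceTime n → ℝ := fun p => u p.1 p.2
  have hU : IsTestFunction (univ ×ˢ Ioo 0 2) U := ⟨hu, hc, hs⟩
  have hΩ : ∀ p ∈ (univ : Set (EuclideanSpace ℝ (Fin n))) ×ˢ Ioo (0 : ℝ) 2, p.2 ∈ Ioo 0 2 :=
    fun p hp => hp.2
  have hcarleman := carlemanIntegral_div_mul_sq_add_spaceGradSq_le ha hκ hΩ hU
  rw [carlemanIntegral_eq_setIntegral (fun t ht => ht.1) a
      (isTestFunction_div_mul_sq_add_spaceGradSq (fun p hp => (hΩ p hp).1) hU κ),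
    carlemanIntegral_eq_setIntegral (fun t ht => ht.1) a hU.backwardHeat.sq] at hcarleman
  simpa only [← norm_gradient_slice_sq (hU.differentiableAt _),
    ← deriv_add_lap_slice (contDiff_infty.1 hU.contDiff 2), sq_abs] using hcarleman

/-- The Carleman inequality of Escauriaza–Seregin–Šverák: for an absolute constant
`c₀ > 0`, every `a > 0` and every smooth compactly supported
`u : ℝⁿ × (0,2) → ℝ`,
`∫∫ h(t)^{-2a} e^{-|x|²/4t} ((a/t) u² + |∇u|²) ≤ c₀ ∫∫ h(t)^{-2a} e^{-|x|²/4t} |∂ₜu + Δu|²`. -/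
theorem carleman_ESS :
    ∃ c₀ : ℝ, 0 < c₀ ∧
      ∀ n : ℕ, 1 ≤ n → ∀ a : ℝ, 0 < a →
        ∀ u : EuclideanSpace ℝ (Fin n) → ℝ → ℝ,
          ContDiff ℝ (⊤ : ℕ∞) (fun p : EuclideanSpace ℝ (Fin n) × ℝ => u p.1 p.2) →
          HasCompactSupport (fun p : EuclideanSpace ℝ (Fin n) × ℝ => u p.1 p.2) →
          tsupport (fun p : EuclideanSpace ℝ (Fin n) × ℝ => u p.1 p.2) ⊆
            Set.univ ×ˢ Set.Ioo (0 : ℝ) 2 →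
          (∫ t in Set.Ioo (0 : ℝ) 2, ∫ x : EuclideanSpace ℝ (Fin n),
              hfun t ^ (-(2 * a)) * Real.exp (-‖x‖ ^ 2 / (4 * t)) *
                ((a / t) * (u x t) ^ 2 + ‖gradient (fun y => u y t) x‖ ^ 2))
            ≤ c₀ * ∫ t in Set.Ioo (0 : ℝ) 2, ∫ x : EuclideanSpace ℝ (Fin n),
              hfun t ^ (-(2 * a)) * Real.exp (-‖x‖ ^ 2 / (4 * t)) *
                |deriv (u x) t + lap (fun y => u y t) x| ^ 2 := by
  obtain ⟨c₀, hc₀, hcarleman⟩ := carleman_ESS_general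
  exact ⟨c₀, hc₀, fun n _ a ha => hcarleman n a (by linarith) a (by linarith)⟩
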